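/- Let Ω ⊆ ℝⁿ be open, let v : ℝⁿ → ℝᵐ (or ℝ) be locally square integrable on Ω, let 0 < m < M < ∞ and r > 0, and suppose that the concentric balls B_{mr} ⊆ B_{Mr} are compactly contained in Ω and satisfy ∫_{B_{mr}} |v|² dx > ∫_{B_{Mr}} |v − (v)_{B_{Mr}}|² dx, where (v)_{B_{Mr}} denotes the average of v over B_{Mr}. Then for every κ ∈ [m, M], the averages satisfy ⨍_{B_{κr}} |v|² dx ≤ 9 ⨍_{B_{mr}} |v|² dx. -/

import Mathlib

/-!
Write `c` for the average of `v` over `B_{Mr}`, `A = ∫_{B_{mr}} v²` and `D = ∫_{B_{Mr}} (v - c)²`,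
so that `D < A`. Young's inequality gives `v² ≤ (3/2) c² + 3 (v - c)²`, which averaged over
`B_{κr}` controls `v²` by `(3/2) c² + 3 D / |B_{mr}|`, and `c² ≤ 2 v² + 2 (v - c)²`, which averaged
over `B_{mr}` yields `c² ≤ 4 A / |B_{mr}|`. Together this is the bound with constant
`(3/2) · 4 + 3 = 9`.

Only `v²` is assumed integrable, so `v` itself might be non-measurable. In that case its Bochner
average is `0` by convention, `D` is the integral of `v²` over `B_{Mr}`, and `D < A` is
contradictory.
-/

open MeasureTheory Metric

/-- Change-of-scale lemma: if `v` is locally square integrable on an open set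
`Ω ⊆ ℝⁿ`, `0 < m < M`, `r > 0`, the concentric balls `B_{mr} ⊆ B_{Mr}` are compactly contained
in `Ω` and `∫_{B_{mr}} |v|² > ∫_{B_{Mr}} |v − (v)_{B_{Mr}}|²`, then for every `κ ∈ [m, M]`,
`⨍_{B_{κr}} |v|² ≤ 9 ⨍_{B_{mr}} |v|²`. -/
theorem change_of_scale (n : ℕ) (Ω : Set (EuclideanSpace ℝ (Fin n))) (hΩ : IsOpen Ω)
    (v : EuclideanSpace ℝ (Fin n) → ℝ)
    (hv : LocallyIntegrableOn (fun x => (v x) ^ 2) Ω volume)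
    (m M r : ℝ) (hm : 0 < m) (hmM : m < M) (hr : 0 < r)
    (x₀ : EuclideanSpace ℝ (Fin n))
    (hball : closedBall x₀ (M * r) ⊆ Ω)
    (hyp : (∫ x in ball x₀ (m * r), (v x) ^ 2) >
      ∫ x in ball x₀ (M * r), (v x - ⨍ y in ball x₀ (M * r), v y) ^ 2) :
    ∀ κ ∈ Set.Icc m M,
      (⨍ x in ball x₀ (κ * r), (v x) ^ 2) ≤ 9 * ⨍ x in ball x₀ (m * r), (v x) ^ 2 := by
  rintro κ ⟨hmκ, hκM⟩
  have hmr : 0 < m * r := mul_pos hm hr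
  have hsub_mκ : ball x₀ (m * r) ⊆ ball x₀ (κ * r) := ball_subset_ball (by gcongr)
  have hsub_κM : ball x₀ (κ * r) ⊆ ball x₀ (M * r) := ball_subset_ball (by gcongr)
  have hsqM : IntegrableOn (fun x => (v x) ^ 2) (ball x₀ (M * r)) volume :=
    (hv.integrableOn_compact_subset hball (isCompact_closedBall _ _)).mono_set
      ball_subset_closedBall
  have hvM : IntegrableOn v (ball x₀ (M * r)) volume := by
    by_contra hnot
    have havg : (⨍ y in ball x₀ (M * r), v y) = 0 := by
      rw [setAverage_eq, integral_undef hnot, smul_zero]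
    simp only [havg, sub_zero] at hyp
    exact hyp.not_ge (setIntegral_mono_set hsqM (ae_of_all _ fun x => sq_nonneg _)
      (hsub_mκ.trans hsub_κM).eventuallyLE)
  generalize (⨍ y in ball x₀ (M * r), v y) = c at hyp
  have hconst : ∀ a b : ℝ, IntegrableOn (fun _ => a) (ball x₀ b) volume := fun a b =>
    integrableOn_const measure_ball_lt_top.ne
  have hdevM : IntegrableOn (fun x => (v x - c) ^ 2) (ball x₀ (M * r)) volume := by
    have h : IntegrableOn (fun x => (v x) ^ 2 - 2 * c * v x + c ^ 2) (ball x₀ (M * r)) volume :=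
      (hsqM.sub (hvM.const_mul (2 * c))).add (hconst (c ^ 2) (M * r))
    exact h.congr_fun (fun x _ => by ring) measurableSet_ball
  have hdev_le : ∀ s ⊆ ball x₀ (M * r),
      ∫ x in s, (v x - c) ^ 2 ≤ ∫ x in ball x₀ (M * r), (v x - c) ^ 2 := fun s hs =>
    setIntegral_mono_set hdevM (ae_of_all _ fun x => sq_nonneg _) hs.eventuallyLE
  have hDκ := hdev_le _ hsub_κM
  have hDm := hdev_le _ (hsub_mκ.trans hsub_κM)
  have hκ : ∫ x in ball x₀ (κ * r), (v x) ^ 2 ≤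
      volume.real (ball x₀ (κ * r)) * (3 / 2 * c ^ 2)
        + 3 * ∫ x in ball x₀ (κ * r), (v x - c) ^ 2 := by
    have hdev := (hdevM.mono_set hsub_κM).const_mul 3
    rw [← integral_const_mul, ← smul_eq_mul (volume.real _), ← setIntegral_const,
      ← integral_add (hconst _ _) hdev]
    refine integral_mono (hsqM.mono_set hsub_κM) ((hconst _ _).add hdev) fun x => ?_
    -- The difference of the two sides is `(1/2) (c - 2 (v - c))²`.
    change (v x) ^ 2 ≤ 3 / 2 * c ^ 2 + 3 * (v x - c) ^ 2
    nlinarith [sq_nonneg (c - 2 * (v x - c))]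
  have hc : volume.real (ball x₀ (m * r)) * c ^ 2 ≤
      2 * (∫ x in ball x₀ (m * r), (v x) ^ 2) + 2 * ∫ x in ball x₀ (m * r), (v x - c) ^ 2 := by
    have hdev := (hdevM.mono_set (hsub_mκ.trans hsub_κM)).const_mul 2
    have hsq := (hsqM.mono_set (hsub_mκ.trans hsub_κM)).const_mul 2
    rw [← integral_const_mul, ← integral_const_mul, ← smul_eq_mul (volume.real _),
      ← setIntegral_const, ← integral_add hsq hdev]
    refine integral_mono (hconst _ _) (hsq.add hdev) fun x => ?_
    change c ^ 2 ≤ 2 * (v x) ^ 2 + 2 * (v x - c) ^ 2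
    nlinarith [sq_nonneg (v x + (v x - c))]
  have hVm : 0 < volume.real (ball x₀ (m * r)) :=
    ENNReal.toReal_pos (measure_ball_pos volume x₀ hmr).ne' measure_ball_lt_top.ne
  have hVmκ : volume.real (ball x₀ (m * r)) ≤ volume.real (ball x₀ (κ * r)) :=
    measureReal_mono hsub_mκ measure_ball_lt_top.ne
  have hA : 0 ≤ ∫ x in ball x₀ (m * r), (v x) ^ 2 := integral_nonneg fun x => sq_nonneg _
  rw [setAverage_eq, setAverage_eq, smul_eq_mul, smul_eq_mul]
  generalize volume.real (ball x₀ (m * r)) = Vm at *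
  generalize volume.real (ball x₀ (κ * r)) = Vκ at *
  generalize (∫ x in ball x₀ (m * r), (v x) ^ 2) = A at *
  have hVκ : 0 < Vκ := hVm.trans_le hVmκ
  have hc' : c ^ 2 ≤ 4 * (Vm⁻¹ * A) := by
    rw [← div_eq_inv_mul, ← mul_div_assoc, le_div_iff₀ hVm]
    linarith
  have hA' : A ≤ Vκ * (Vm⁻¹ * A) := by
    rw [← div_eq_inv_mul, ← mul_div_assoc, le_div_iff₀ hVm, mul_comm]
    gcongr
  rw [inv_mul_le_iff₀ hVκ]
  have := mul_le_mul_of_nonneg_left hc' hVκ.le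
  linarith
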